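/- Let n = h + d where h ≥ 4 is a Hadamard order and 1 ≤ d ≤ 3. Then D(n) ≥ h^{h/2}·(μ(h)^d − η), where η = 0 if d = 1, η = 1 if d = 2, and η = 5·√h + 3 if d = 3. -/

import Mathlib

open Matrix

/-- A positive integer `m` is a Hadamard order if there is an `m × m` matrix
with entries in `{−1, 1}` satisfying `Aᵀ A = m I`. -/
def IsHadamardOrder (m : ℕ) : Prop :=
  ∃ A : Matrix (Fin m) (Fin m) ℝ,
    (∀ i j, A i j = 1 ∨ A i j = -1) ∧ Aᵀ * A = (m : ℝ) • 1

/-- `D(n)`: the maximal determinant of an `n × n` matrix with entries in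
`{−1, 1}`. -/
noncomputable def maxDet (n : ℕ) : ℝ :=
  sSup {x : ℝ | ∃ M : Matrix (Fin n) (Fin n) ℝ,
    (∀ i j, M i j = 1 ∨ M i j = -1) ∧ M.det = x}

/-- `μ(h) = 1 + 2^{−h} h binom(h, h/2)`. -/
noncomputable def mu (h : ℕ) : ℝ :=
  1 + (2 : ℝ) ^ (-(h : ℤ)) * h * (h.choose (h / 2) : ℝ)

/-!
Border a Hadamard matrix `A` of order `h` by `d` columns and `d` rows of signs: the columns are
independent uniform sign vectors `b₁, …, b_d`, and the `i`-th row is the sign pattern `sᵢ` of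
`Aᵀ bᵢ`. The Schur complement of `A` then involves the matrix with entries `h⁻¹ (sᵢ ⬝ Aᵀ bⱼ)`.
Since the columns of `A` are orthogonal, the `k`-th entry of `sᵢ` and the `l`-th entry of `Aᵀ bᵢ`
are uncorrelated for `k ≠ l`, while for `k = l` their product has mean `e`, the expected absolute
displacement of a simple random walk of `h` steps. By the Leibniz formula a principal `k × k` minor
of the matrix has mean `(e / h) ^ k * (h (h - 1) ⋯ (h - k + 1))`. The corner block supplies the
identity matrix together with off-diagonal signs, and as a determinant is affine in each entry,
these signs can be chosen so as not to decrease it. Hence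
`D(h + d) ≥ h ^ (h / 2) * ∑ₖ (d choose k) (e / h) ^ k (h (h - 1) ⋯ (h - k + 1))`.
Finally `μ(h) - 1 ≤ e`, `(μ(h) - 1) ^ 2 ≤ h` by Cauchy–Schwarz, and
`h (h - 1) ⋯ (h - k + 1) ≥ h ^ k * (1 - (k choose 2) / h)`, so the sum is at least
`μ(h) ^ d - (d choose 2) μ(h) ^ (d - 2)`.
-/

open scoped BigOperators

section Minors

variable {R ι κ : Type*} [CommRing R] [DecidableEq ι] [Fintype κ] [DecidableEq κ]

lemma det_one_submatrix_self (f : κ → ι) [Decidable (Function.Injective f)] :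
    ((1 : Matrix ι ι R).submatrix f f).det = if Function.Injective f then 1 else 0 := by
  split_ifs with hf
  · rw [submatrix_one f hf, det_one]
  · obtain ⟨i, j, hij, hne⟩ := Function.not_injective_iff.1 hf
    exact det_zero_of_row_eq hne (by ext k; rw [submatrix_apply, submatrix_apply, hij])

lemma det_one_add_eq_sum_minors (M : Matrix κ κ R) :
    (1 + M).det = ∑ k ∈ Finset.range (Fintype.card κ + 1),
      ∑ s ∈ Finset.univ.powersetCard k,
        (M.submatrix (Subtype.val : s → κ) (Subtype.val : s → κ)).det := by
  have hdeg : (det (1 + (Polynomial.X : Polynomial R) • M.map Polynomial.C)).natDegree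
      < Fintype.card κ + 1 := by
    have := Polynomial.natDegree_det_X_add_C_le M 1
    rw [Matrix.map_one _ Polynomial.C_0 Polynomial.C_1, add_comm] at this
    exact Nat.lt_succ_of_le this
  have heval := Polynomial.eval_eq_sum_range' hdeg 1
  simp only [one_pow, mul_one, coeff_det_one_add_X_smul_eq_sum_minors] at heval
  rw [← heval, ← Polynomial.coe_evalRingHom, RingHom.map_det]
  congr 1
  ext i j
  simp [one_apply, apply_ite]

end Minors

section ExpectedDeterminant

variable {K ι κ Ω : Type*} [Field K] [CharZero K] [Fintype κ] [DecidableEq κ] [Fintype Ω]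

lemma expect_prod_eq_prod_expect (g : κ → Ω → K) :
    𝔼 w : κ → Ω, ∏ i, g i (w i) = ∏ i, 𝔼 a, g i a := by
  simp only [Fintype.expect_eq_sum_div_card, Finset.prod_div_distrib, Finset.prod_univ_sum,
    Fintype.piFinset_univ, Fintype.card_pi, Finset.prod_const, Nat.cast_pow, Finset.card_univ]

lemma expect_comp_restrict [Nonempty Ω] (s : Finset κ) (F : (s → Ω) → K) :
    𝔼 w : κ → Ω, F (fun i => w i) = 𝔼 w, F w := by
  rw [Fintype.expect_equiv (Equiv.piEquivPiSubtypeProd (· ∈ s) fun _ => Ω)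
      (fun w => F fun i => w i) (fun w => F w.1) fun _ => rfl,
    ← Finset.univ_product_univ, Finset.expect_product]
  simp only [Fintype.expect_const]

lemma expect_prod_dotProduct_perm [Fintype ι] (u v : Ω → ι → K) (σ : Equiv.Perm κ) :
    𝔼 w : κ → Ω, ∏ i, v (w (σ i)) ⬝ᵥ u (w i) =
      ∑ f : κ → ι, ∏ i, 𝔼 a, v a (f i) * u a (f (σ i)) := by
  have hexpand (w : κ → Ω) : ∏ i, v (w (σ i)) ⬝ᵥ u (w i) =
      ∑ f : κ → ι, ∏ i, v (w i) (f i) * u (w i) (f (σ i)) := by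
    simp only [dotProduct, Finset.prod_univ_sum, Fintype.piFinset_univ]
    refine (Fintype.sum_equiv (σ.arrowCongr (Equiv.refl ι)).symm _ _ fun f => ?_).symm
    simp only [Finset.prod_mul_distrib]
    rw [← Equiv.prod_comp σ fun i => v (w i) (f i)]
    rfl
  simp only [hexpand, Finset.expect_sum_comm]
  exact Finset.sum_congr rfl fun f _ =>
    expect_prod_eq_prod_expect fun i a => v a (f i) * u a (f (σ i))

variable [Fintype ι] [DecidableEq ι] {u v : Ω → ι → K} {c : K}

lemma expect_det_dotProduct
    (huv : ∀ k l, 𝔼 a, v a k * u a l = (c • (1 : Matrix ι ι K)) k l) :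
    𝔼 w : κ → Ω, (of fun i j => v (w i) ⬝ᵥ u (w j)).det =
      c ^ Fintype.card κ * (Fintype.card ι).descFactorial (Fintype.card κ) := by
  calc 𝔼 w : κ → Ω, (of fun i j => v (w i) ⬝ᵥ u (w j)).det
      = ∑ f : κ → ι, ((c • (1 : Matrix ι ι K)).submatrix f f).det := by
        simp only [det_apply', of_apply, Finset.expect_sum_comm, ← Finset.mul_expect,
          expect_prod_dotProduct_perm, huv, Finset.mul_sum]
        rw [Finset.sum_comm]
        simp [Matrix.one_apply, eq_comm]
    _ = ∑ f : κ → ι, c ^ Fintype.card κ * if Function.Injective f then 1 else 0 := by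
        simp only [submatrix_smul, Pi.smul_apply, det_smul, det_one_submatrix_self]
    _ = c ^ Fintype.card κ * (Fintype.card ι).descFactorial (Fintype.card κ) := by
        rw [← Finset.mul_sum, Finset.sum_boole,
          ← Fintype.card_embedding_eq, ← Fintype.card_subtype,
          Fintype.card_congr (Equiv.subtypeInjectiveEquivEmbedding κ ι)]

theorem expect_det_one_add_dotProduct [Nonempty Ω]
    (huv : ∀ k l, 𝔼 a, v a k * u a l = (c • (1 : Matrix ι ι K)) k l) :
    𝔼 w : κ → Ω, (1 + of fun i j => v (w i) ⬝ᵥ u (w j)).det =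
      ∑ k ∈ Finset.range (Fintype.card κ + 1),
        (Fintype.card κ).choose k * (c ^ k * (Fintype.card ι).descFactorial k) := by
  have hminor (s : Finset κ) :
      𝔼 w : κ → Ω, ((of fun i j => v (w i) ⬝ᵥ u (w j)).submatrix
          (Subtype.val : s → κ) (Subtype.val : s → κ)).det =
        c ^ s.card * (Fintype.card ι).descFactorial s.card := by
    rw [← Fintype.card_coe s, ← expect_det_dotProduct huv]
    exact expect_comp_restrict s fun w => (of fun i j => v (w i) ⬝ᵥ u (w j)).det
  simp only [det_one_add_eq_sum_minors, Finset.expect_sum_comm, hminor]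
  refine Finset.sum_congr rfl fun k _ => ?_
  rw [Finset.sum_congr rfl fun s hs => by rw [(Finset.mem_powersetCard.1 hs).2],
    Finset.sum_const, Finset.card_powersetCard, Finset.card_univ, nsmul_eq_mul]

end ExpectedDeterminant

section SignMatrix

variable {ι κ l m : Type*}

/-- A matrix all of whose entries are `1` or `-1`. -/
def IsSignMatrix (M : Matrix ι κ ℝ) : Prop :=
  ∀ i j, M i j = 1 ∨ M i j = -1

namespace IsSignMatrix

lemma fromBlocks {A : Matrix ι l ℝ} {B : Matrix ι m ℝ} {C : Matrix κ l ℝ} {D : Matrix κ m ℝ}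
    (hA : IsSignMatrix A) (hB : IsSignMatrix B) (hC : IsSignMatrix C) (hD : IsSignMatrix D) :
    IsSignMatrix (fromBlocks A B C D)
  | .inl i, .inl j => hA i j
  | .inl i, .inr j => hB i j
  | .inr i, .inl j => hC i j
  | .inr i, .inr j => hD i j

lemma neg {M : Matrix ι κ ℝ} (hM : IsSignMatrix M) : IsSignMatrix (-M) := fun i j =>
  (hM i j).symm.imp (fun h => by rw [neg_apply, h, neg_neg]) fun h => by rw [neg_apply, h]

lemma updateRow_neg [DecidableEq ι] {M : Matrix ι κ ℝ} (hM : IsSignMatrix M) (i : ι) :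
    IsSignMatrix (M.updateRow i (-M i)) := by
  intro i' j
  obtain rfl | hi := eq_or_ne i' i
  · rw [updateRow_self]
    exact hM.neg i' j
  · simpa only [updateRow_ne hi] using hM i' j

variable [Fintype ι] [DecidableEq ι] {M : Matrix ι ι ℝ}

lemma det_le_factorial (hM : IsSignMatrix M) : M.det ≤ (Fintype.card ι).factorial := by
  have hdet := det_le (A := M) (abv := AbsoluteValue.abs) (x := 1) fun i j =>
    (abs_eq_abs.2 (hM i j)).trans_le abs_one.le
  rw [one_pow, nsmul_one] at hdet
  exact (le_abs_self _).trans hdet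

lemma det_le_maxDet (hM : IsSignMatrix M) : M.det ≤ maxDet (Fintype.card ι) := by
  have e := Fintype.equivFin ι
  have hbdd : BddAbove {x : ℝ | ∃ N : Matrix (Fin (Fintype.card ι)) (Fin (Fintype.card ι)) ℝ,
      IsSignMatrix N ∧ N.det = x} := by
    refine ⟨(Fintype.card (Fin (Fintype.card ι))).factorial, ?_⟩
    rintro _ ⟨N, hN, rfl⟩
    exact hN.det_le_factorial
  exact le_csSup hbdd ⟨M.submatrix e.symm e.symm, fun i j => hM _ _, det_submatrix_equiv_self _ _⟩

lemma abs_det_le_maxDet (hM : IsSignMatrix M) : |M.det| ≤ maxDet (Fintype.card ι) := by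
  refine abs_le'.2 ⟨hM.det_le_maxDet, ?_⟩
  obtain _ | ⟨⟨i⟩⟩ := isEmpty_or_nonempty ι
  · linarith [hM.det_le_maxDet, det_isEmpty (A := M)]
  · calc -M.det = (M.updateRow i (-M i)).det := by
          rw [← neg_one_smul ℝ (M i), det_updateRow_smul, updateRow_eq_self, neg_one_mul]
      _ ≤ maxDet (Fintype.card ι) := (hM.updateRow_neg i).det_le_maxDet

end IsSignMatrix

end SignMatrix

section OffDiagonal

variable {R κ : Type*} [CommRing R] [Fintype κ] [DecidableEq κ]

lemma det_add_single (M : Matrix κ κ R) (i j : κ) (t : R) :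
    (M + single i j t).det = M.det + t * M.adjugate j i := by
  have hrow : M + single i j t = M.updateRow i (M i + t • Pi.single j 1) := by
    ext k l
    rw [Matrix.add_apply, single_eq_updateRow_zero, updateRow_apply, updateRow_apply]
    split_ifs with hk
    · simp [hk, Pi.single_apply]
    · simp
  rw [hrow, det_updateRow_add, updateRow_eq_self, det_updateRow_smul, adjugate_apply]

/-- As the determinant is affine in each entry, one of the two signs does not decrease it. -/
lemma exists_sign_det_le_det_add_single (M : Matrix κ κ ℝ) (i j : κ) :
    ∃ t : ℝ, (t = 1 ∨ t = -1) ∧ M.det ≤ (M + single i j t).det := by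
  simp only [det_add_single, le_add_iff_nonneg_right]
  obtain h | h := le_total 0 (M.adjugate j i)
  · exact ⟨1, .inl rfl, by rwa [one_mul]⟩
  · exact ⟨-1, .inr rfl, by rwa [neg_one_mul, neg_nonneg]⟩

lemma exists_sign_on_det_le_det_add (M : Matrix κ κ ℝ) (P : Finset (κ × κ)) :
    ∃ N : Matrix κ κ ℝ, (∀ i j, if (i, j) ∈ P then N i j = 1 ∨ N i j = -1 else N i j = 0) ∧
      M.det ≤ (M + N).det := by
  induction P using Finset.induction_on with
  | empty => exact ⟨0, by simp, by rw [add_zero]⟩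
  | insert p P hp ih =>
    obtain ⟨N, hN, hdet⟩ := ih
    obtain ⟨t, ht, hdet'⟩ := exists_sign_det_le_det_add_single (M + N) p.1 p.2
    refine ⟨N + single p.1 p.2 t, fun i j => ?_, hdet.trans (by rwa [← add_assoc])⟩
    have hij := hN i j
    obtain rfl | hne := eq_or_ne (i, j) p
    · simpa [hp, if_neg hp ▸ hij] using ht
    · have : ¬ (p.1 = i ∧ p.2 = j) := fun h => hne (Prod.ext h.1.symm h.2.symm)
      simpa [hne, single, this] using hij

lemma exists_isSignMatrix_det_one_add_le (M : Matrix κ κ ℝ) :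
    ∃ D : Matrix κ κ ℝ, IsSignMatrix D ∧ (1 + M).det ≤ (M + D).det := by
  obtain ⟨N, hN, hdet⟩ := exists_sign_on_det_le_det_add (1 + M) Finset.univ.offDiag
  refine ⟨1 + N, fun i j => ?_, hdet.trans_eq (by rw [add_comm 1 M, add_assoc])⟩
  have hij := hN i j
  obtain rfl | hne := eq_or_ne i j
  · left; simpa using hij
  · simpa [hne] using hij

end OffDiagonal

section SchurComplement

variable {ι κ : Type*} [Fintype ι] [DecidableEq ι] {A : Matrix ι ι ℝ}

lemma isSignMatrix_of_isHadamard (hA : A.IsHadamard) : IsSignMatrix A := fun i j =>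
  Unitary.mem_iff_eq_one_or_eq_neg_one.1 (hA.apply_mem i j)

lemma transpose_mul_self_of_isHadamard (hA : A.IsHadamard) :
    Aᵀ * A = (Fintype.card ι : ℝ) • 1 := by
  rw [← hA.conjTranspose_mul, conjTranspose_eq_transpose_of_trivial]

lemma abs_det_of_isHadamard (hA : A.IsHadamard) :
    |A.det| = (Fintype.card ι : ℝ) ^ ((Fintype.card ι : ℝ) / 2) := by
  have hsq : A.det ^ 2 = (Fintype.card ι : ℝ) ^ Fintype.card ι := by
    rw [← hA.det_mul_star_det, star_trivial, sq]
  rw [← Real.sqrt_sq_eq_abs, hsq, Real.sqrt_eq_rpow, ← Real.rpow_natCast,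
    ← Real.rpow_mul (Nat.cast_nonneg _), mul_one_div]

variable [Fintype κ] [DecidableEq κ]

lemma abs_det_fromBlocks_of_isHadamard [Nonempty ι] (hA : A.IsHadamard) (B : Matrix ι κ ℝ)
    (C : Matrix κ ι ℝ) (D : Matrix κ κ ℝ) :
    |(fromBlocks A B C (-D)).det| = (Fintype.card ι : ℝ) ^ ((Fintype.card ι : ℝ) / 2) *
      |((Fintype.card ι : ℝ)⁻¹ • (C * Aᵀ * B) + D).det| := by
  have hinv : ((Fintype.card ι : ℝ)⁻¹ • Aᵀ) * A = 1 := by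
    rw [smul_mul, transpose_mul_self_of_isHadamard hA,
      inv_smul_smul₀ (Nat.cast_ne_zero.2 Fintype.card_ne_zero)]
  let : Invertible A := ⟨_, hinv, mul_eq_one_comm.1 hinv⟩
  have hschur : -D - C * ⅟A * B = -((Fintype.card ι : ℝ)⁻¹ • (C * Aᵀ * B) + D) := by
    rw [invOf_eq_left_inv hinv, Matrix.mul_smul, smul_mul]
    abel
  rw [det_fromBlocks₁₁, hschur, det_neg, abs_mul, abs_mul, abs_pow, abs_neg, abs_one, one_pow,
    one_mul, abs_det_of_isHadamard hA]

theorem rpow_mul_det_one_add_le_maxDet [Nonempty ι] (hA : A.IsHadamard) {B : Matrix ι κ ℝ}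
    {C : Matrix κ ι ℝ} (hB : IsSignMatrix B) (hC : IsSignMatrix C) :
    (Fintype.card ι : ℝ) ^ ((Fintype.card ι : ℝ) / 2) *
        (1 + (Fintype.card ι : ℝ)⁻¹ • (C * Aᵀ * B)).det ≤
      maxDet (Fintype.card ι + Fintype.card κ) := by
  obtain ⟨D, hD, hdet⟩ :=
    exists_isSignMatrix_det_one_add_le ((Fintype.card ι : ℝ)⁻¹ • (C * Aᵀ * B))
  calc (Fintype.card ι : ℝ) ^ ((Fintype.card ι : ℝ) / 2) *
        (1 + (Fintype.card ι : ℝ)⁻¹ • (C * Aᵀ * B)).det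
      ≤ |(fromBlocks A B C (-D)).det| := by
        rw [abs_det_fromBlocks_of_isHadamard hA]
        gcongr
        exact hdet.trans (le_abs_self _)
    _ ≤ maxDet (Fintype.card ι + Fintype.card κ) := by
        rw [← Fintype.card_sum]
        exact ((isSignMatrix_of_isHadamard hA).fromBlocks hB hC hD.neg).abs_det_le_maxDet

end SchurComplement

section RandomSigns

variable {ι : Type*}

/-- The sign vector `s`, with entries in the real numbers. -/
def signVector (s : ι → ℤˣ) (i : ι) : ℝ :=
  ((s i : ℤ) : ℝ)

lemma signVector_eq_one_or_eq_neg_one (s : ι → ℤˣ) (i : ι) :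
    signVector s i = 1 ∨ signVector s i = -1 := by
  obtain h | h := Int.units_eq_one_or (s i) <;> simp [signVector, h]

lemma signVector_mul (s t : ι → ℤˣ) (i : ι) :
    signVector (s * t) i = signVector s i * signVector t i := by
  simp [signVector]

lemma signVector_mul_self (s : ι → ℤˣ) (i : ι) : signVector s i * signVector s i = 1 :=
  mul_self_eq_one_iff.2 (signVector_eq_one_or_eq_neg_one s i)

lemma exists_signVector_eq {x : ι → ℝ} (hx : ∀ i, x i = 1 ∨ x i = -1) :
    ∃ s, signVector s = x := by
  classical
  refine ⟨fun i => if x i = 1 then 1 else -1, funext fun i => ?_⟩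
  obtain h | h := hx i <;> norm_num [signVector, h]

/-- The sign of `x`, with the sign of `0` taken to be `1` so that the value is always `1` or
`-1`. -/
noncomputable def pmSign (x : ℝ) : ℝ :=
  if 0 ≤ x then 1 else -1

lemma pmSign_eq_one_or_eq_neg_one (x : ℝ) : pmSign x = 1 ∨ pmSign x = -1 :=
  ite_eq_or_eq _ _ _

lemma pmSign_mul_self (x : ℝ) : pmSign x * x = |x| := by
  rw [pmSign]
  split_ifs with hx
  · rw [one_mul, abs_of_nonneg hx]
  · rw [neg_one_mul, abs_of_neg (not_le.1 hx)]

variable [Fintype ι] [DecidableEq ι]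

variable (ι) in
/-- The mean of `|∑ i, s i|` over all sign vectors `s` on `ι`: the expected absolute displacement
of a simple random walk after `card ι` steps. -/
noncomputable def meanAbsSignSum : ℝ :=
  𝔼 s : ι → ℤˣ, |∑ i, signVector s i|

lemma expect_pmSign_sum_mul (j : ι) :
    𝔼 s : ι → ℤˣ, pmSign (∑ i, signVector s i) * signVector s j =
      meanAbsSignSum ι / Fintype.card ι := by
  have hsymm (k : ι) : 𝔼 s : ι → ℤˣ, pmSign (∑ i, signVector s i) * signVector s k =
      𝔼 s : ι → ℤˣ, pmSign (∑ i, signVector s i) * signVector s j := by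
    refine Fintype.expect_equiv ((Equiv.swap j k).arrowCongr (Equiv.refl _)) _ _ fun s => ?_
    have hperm (i : ι) : signVector ((Equiv.swap j k).arrowCongr (Equiv.refl _) s) i =
        signVector s (Equiv.swap j k i) := by
      simp [signVector]
    simp only [hperm, Equiv.sum_comp (Equiv.swap j k), Equiv.swap_apply_left]
  have hsum : meanAbsSignSum ι =
      ∑ k, 𝔼 s : ι → ℤˣ, pmSign (∑ i, signVector s i) * signVector s k := by
    simp only [meanAbsSignSum, ← pmSign_mul_self, Finset.mul_sum, Finset.expect_sum_comm]
  have : Nonempty ι := ⟨j⟩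
  have hcard : (Fintype.card ι : ℝ) ≠ 0 := Nat.cast_ne_zero.2 Fintype.card_ne_zero
  rw [hsum, Finset.sum_congr rfl fun k _ => hsymm k, Finset.sum_const, Finset.card_univ,
    nsmul_eq_mul, mul_div_cancel_left₀ _ hcard]

lemma expect_pmSign_dotProduct_mul {x : ι → ℝ} (hx : ∀ i, x i = 1 ∨ x i = -1) (j : ι) :
    𝔼 s : ι → ℤˣ, pmSign (x ⬝ᵥ signVector s) * signVector s j =
      x j * (meanAbsSignSum ι / Fintype.card ι) := by
  obtain ⟨t, rfl⟩ := exists_signVector_eq hx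
  rw [← expect_pmSign_sum_mul j, Finset.mul_expect]
  refine Fintype.expect_equiv (Equiv.mulLeft t) _ _ fun s => ?_
  simp only [Equiv.coe_mulLeft, signVector_mul, dotProduct]
  rw [mul_left_comm (signVector t j), ← mul_assoc (signVector t j), signVector_mul_self, one_mul]

lemma expect_pmSign_mul_of_isHadamard {A : Matrix ι ι ℝ} (hA : A.IsHadamard) (k l : ι) :
    𝔼 s : ι → ℤˣ, pmSign ((Aᵀ *ᵥ signVector s) k) * (Aᵀ *ᵥ signVector s) l =
      (meanAbsSignSum ι • (1 : Matrix ι ι ℝ)) k l := by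
  have hcol : ∀ i, Aᵀ k i = 1 ∨ Aᵀ k i = -1 := fun i => isSignMatrix_of_isHadamard hA i k
  have : Nonempty ι := ⟨k⟩
  have hcard : (Fintype.card ι : ℝ) ≠ 0 := Nat.cast_ne_zero.2 Fintype.card_ne_zero
  calc 𝔼 s : ι → ℤˣ, pmSign ((Aᵀ *ᵥ signVector s) k) * (Aᵀ *ᵥ signVector s) l
      = ∑ j, Aᵀ l j * 𝔼 s : ι → ℤˣ, pmSign (Aᵀ k ⬝ᵥ signVector s) * signVector s j := by
        simp only [mulVec, dotProduct, Finset.mul_sum, Finset.expect_sum_comm, Finset.mul_expect,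
          mul_left_comm]
    _ = (Aᵀ * A) k l * (meanAbsSignSum ι / Fintype.card ι) := by
        simp only [expect_pmSign_dotProduct_mul hcol, mul_apply, Finset.sum_mul, transpose_apply,
          mul_left_comm, mul_assoc]
    _ = (meanAbsSignSum ι • (1 : Matrix ι ι ℝ)) k l := by
        rw [transpose_mul_self_of_isHadamard hA, Matrix.smul_apply, Matrix.smul_apply, smul_eq_mul,
          smul_eq_mul]
        field_simp

variable {κ : Type*} [Fintype κ]

theorem rpow_mul_sum_choose_mul_descFactorial_le_maxDet [Nonempty ι] {A : Matrix ι ι ℝ}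
    (hA : A.IsHadamard) :
    (Fintype.card ι : ℝ) ^ ((Fintype.card ι : ℝ) / 2) *
        ∑ k ∈ Finset.range (Fintype.card κ + 1), (Fintype.card κ).choose k *
          ((meanAbsSignSum ι / Fintype.card ι) ^ k * (Fintype.card ι).descFactorial k) ≤
      maxDet (Fintype.card ι + Fintype.card κ) := by
  classical
  let u (s : ι → ℤˣ) : ι → ℝ := Aᵀ *ᵥ signVector s
  let v (s : ι → ℤˣ) (k : ι) : ℝ := pmSign (u s k)
  have huv (k l : ι) : 𝔼 s, ((Fintype.card ι : ℝ)⁻¹ • v s) k * u s l =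
      ((meanAbsSignSum ι / Fintype.card ι) • (1 : Matrix ι ι ℝ)) k l := by
    simp only [Pi.smul_apply, smul_eq_mul, mul_assoc, ← Finset.mul_expect, v, u,
      expect_pmSign_mul_of_isHadamard hA, Matrix.smul_apply]
    ring
  obtain ⟨w, -, hw⟩ := Finset.exists_le_of_le_expect Finset.univ_nonempty
    (expect_det_one_add_dotProduct (κ := κ) huv).ge
  have hprod : (of fun i j => ((Fintype.card ι : ℝ)⁻¹ • v (w i)) ⬝ᵥ u (w j)) =
      (Fintype.card ι : ℝ)⁻¹ • (of (fun i => v (w i)) * Aᵀ *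
        (of fun i => signVector (w i))ᵀ) := by
    ext i j
    rw [of_apply, smul_dotProduct, Matrix.mul_assoc]
    rfl
  rw [hprod] at hw
  exact (mul_le_mul_of_nonneg_left hw (by positivity)).trans <| rpow_mul_det_one_add_le_maxDet hA
    (fun i j => signVector_eq_one_or_eq_neg_one (w j) i)
    fun i k => pmSign_eq_one_or_eq_neg_one (u (w i) k)

end RandomSigns

section MeanAbsSignSum

lemma sum_range_succ_choose_mul_sub {R : Type*} [CommRing R] (n m : ℕ) :
    ∑ k ∈ Finset.range (m + 1), ((n + 1).choose k : R) * ((n : R) + 1 - 2 * k) =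
      (n + 1) * n.choose m := by
  induction m with
  | zero => simp
  | succ m ih =>
    have habsorb : ((n : R) + 1) * n.choose m = (n + 1).choose (m + 1) * (m + 1) :=
      mod_cast congrArg (Nat.cast : ℕ → R) (Nat.add_one_mul_choose_eq n m)
    have hpascal : ((n + 1).choose (m + 1) : R) = n.choose m + n.choose (m + 1) :=
      mod_cast congrArg (Nat.cast : ℕ → R) (Nat.choose_succ_succ n m)
    rw [Finset.sum_range_succ, ih]
    push_cast
    rw [hpascal] at habsorb ⊢
    linear_combination 2 * habsorb

lemma choose_succ_le_two_mul_choose_half (n k : ℕ) :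
    (n + 1).choose k ≤ 2 * n.choose ((n + 1) / 2) := by
  have hhalf : n.choose ((n + 1) / 2) = n.choose (n / 2) :=
    Nat.choose_symm_of_eq_add (by omega)
  obtain _ | k := k
  · rw [Nat.choose_zero_right]
    have : 0 < n.choose ((n + 1) / 2) := Nat.choose_pos (by omega)
    omega
  · rw [Nat.choose_succ_succ, hhalf, two_mul]
    exact add_le_add (Nat.choose_le_middle k n) (Nat.choose_le_middle (k + 1) n)

lemma two_mul_choose_half_le_sum_abs (n : ℕ) :
    2 * ((n + 1) * n.choose ((n + 1) / 2)) ≤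
      ∑ k ∈ Finset.range (n + 1 + 1), ((n + 1).choose k : ℝ) * |(n : ℝ) + 1 - 2 * k| := by
  have hle : (n + 1) / 2 + 1 ≤ n + 1 + 1 := by omega
  have hhead := sum_range_succ_choose_mul_sub (R := ℝ) n ((n + 1) / 2)
  have htotal := sum_range_succ_choose_mul_sub (R := ℝ) n (n + 1)
  rw [Nat.choose_succ_self, Nat.cast_zero, mul_zero, ← Finset.sum_range_add_sum_Ico _ hle,
    hhead] at htotal
  calc 2 * ((n + 1) * n.choose ((n + 1) / 2))
      = ∑ k ∈ Finset.range ((n + 1) / 2 + 1), ((n + 1).choose k : ℝ) * ((n : ℝ) + 1 - 2 * k) +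
          ∑ k ∈ Finset.Ico ((n + 1) / 2 + 1) (n + 1 + 1),
            ((n + 1).choose k : ℝ) * -((n : ℝ) + 1 - 2 * k) := by
        simp only [mul_neg, Finset.sum_neg_distrib]
        linarith
    _ ≤ ∑ k ∈ Finset.range ((n + 1) / 2 + 1), ((n + 1).choose k : ℝ) * |(n : ℝ) + 1 - 2 * k| +
          ∑ k ∈ Finset.Ico ((n + 1) / 2 + 1) (n + 1 + 1),
            ((n + 1).choose k : ℝ) * |(n : ℝ) + 1 - 2 * k| := by
        gcongr
        · exact le_abs_self _
        · exact neg_le_abs _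
    _ = _ := Finset.sum_range_add_sum_Ico _ hle

variable {ι : Type*} [Fintype ι]

lemma sum_signVector_eq_card_sub (s : ι → ℤˣ) :
    ∑ i, signVector s i = Fintype.card ι - 2 * (Finset.univ.filter (s · = -1)).card := by
  have hsign (i : ι) : signVector s i = 1 - 2 * if s i = -1 then 1 else 0 := by
    obtain h | h := Int.units_eq_one_or (s i) <;> norm_num [signVector, h]
  simp only [hsign, Finset.sum_sub_distrib, ← Finset.mul_sum, Finset.sum_boole]
  simp

variable [DecidableEq ι]

lemma expect_apply_card_filter_eq_neg_one (g : ℕ → ℝ) :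
    𝔼 s : ι → ℤˣ, g (Finset.univ.filter (s · = -1)).card =
      (∑ k ∈ Finset.range (Fintype.card ι + 1), (Fintype.card ι).choose k * g k) /
        2 ^ Fintype.card ι := by
  have hpowerset := Finset.sum_powerset_apply_card g (x := (Finset.univ : Finset ι))
  simp only [Finset.card_univ, nsmul_eq_mul] at hpowerset
  rw [Fintype.expect_eq_sum_div_card, ← hpowerset]
  congr 1
  · refine Finset.sum_bij' (fun s _ => Finset.univ.filter (s · = -1))
      (fun t _ i => if i ∈ t then -1 else 1) (by simp) (by simp) (fun s _ => ?_) (fun t _ => ?_)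
      fun _ _ => rfl
    · ext i
      obtain h | h := Int.units_eq_one_or (s i) <;> simp [h]
    · ext i
      by_cases hi : i ∈ t <;> simp [hi]
  · simp

theorem mu_sub_one_le_meanAbsSignSum : mu (Fintype.card ι) - 1 ≤ meanAbsSignSum ι := by
  simp only [meanAbsSignSum, sum_signVector_eq_card_sub,
    expect_apply_card_filter_eq_neg_one fun k => |(Fintype.card ι : ℝ) - 2 * k|]
  obtain h | hpos := (Fintype.card ι).eq_zero_or_pos
  · simp [h, mu]
  · obtain ⟨n, h⟩ := Nat.exists_eq_add_one.2 hpos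
    rw [h, mu, add_sub_cancel_left, _root_.zpow_neg, zpow_natCast, mul_assoc,
      ← div_eq_inv_mul]
    gcongr
    push_cast
    refine le_trans ?_ (two_mul_choose_half_le_sum_abs n)
    rw [mul_left_comm]
    gcongr
    exact_mod_cast choose_succ_le_two_mul_choose_half n _

lemma expect_signVector_mul_signVector (i j : ι) :
    𝔼 s : ι → ℤˣ, signVector s i * signVector s j = if i = j then 1 else 0 := by
  split_ifs with hij
  · simp only [hij, signVector_mul_self, Fintype.expect_const]
  · have hflip : 𝔼 s : ι → ℤˣ, signVector s i * signVector s j =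
        𝔼 s : ι → ℤˣ, -(signVector s i * signVector s j) :=
      Fintype.expect_equiv (Equiv.mulLeft (Pi.mulSingle i (-1))) _ _ fun s => by
        simp [signVector, Pi.mulSingle_eq_of_ne' hij]
    rw [Finset.expect_neg_distrib] at hflip
    linarith

lemma expect_sum_signVector_sq :
    𝔼 s : ι → ℤˣ, (∑ i, signVector s i) ^ 2 = Fintype.card ι := by
  simp only [sq, Finset.sum_mul_sum, Finset.expect_sum_comm, expect_signVector_mul_signVector]
  simp

theorem meanAbsSignSum_le_sqrt : meanAbsSignSum ι ≤ √(Fintype.card ι) := by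
  refine Real.le_sqrt_of_sq_le ?_
  have hcs := Finset.expect_mul_sq_le_sq_mul_sq Finset.univ
    (fun s : ι → ℤˣ => |∑ i, signVector s i|) 1
  simpa [expect_sum_signVector_sq, meanAbsSignSum] using hcs

end MeanAbsSignSum

section ElementaryBounds

lemma pow_mul_sub_choose_two_le_mul_descFactorial (h k : ℕ) :
    (h : ℝ) ^ k * (h - k.choose 2) ≤ h * h.descFactorial k := by
  induction k with
  | zero => simp
  | succ k ih =>
    have hchoose : ((k + 1).choose 2 : ℝ) = k + k.choose 2 := by
      rw [Nat.choose_succ_succ' k 1, Nat.choose_one_right, Nat.cast_add]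
    obtain hk | hk := le_or_gt h k
    · have hneg : (h : ℝ) ≤ (k + 1).choose 2 := by
        rw [hchoose]
        exact_mod_cast hk.trans (Nat.le_add_right _ _)
      rw [Nat.descFactorial_of_lt (Nat.lt_succ_of_le hk), Nat.cast_zero, mul_zero]
      exact mul_nonpos_of_nonneg_of_nonpos (by positivity) (by linarith)
    · have hkh : (0 : ℝ) ≤ h - k := sub_nonneg.2 (Nat.cast_le.2 hk.le)
      rw [Nat.descFactorial_succ, Nat.cast_mul, Nat.cast_sub hk.le, hchoose]
      calc (h : ℝ) ^ (k + 1) * (h - (k + k.choose 2))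
          ≤ h ^ (k + 1) * (h - (k + k.choose 2)) + h ^ k * (k * k.choose 2) :=
            le_add_of_nonneg_right (by positivity)
        _ = (h - k) * (h ^ k * (h - k.choose 2)) := by ring
        _ ≤ (h - k) * (h * h.descFactorial k) := by gcongr
        _ = h * ((h - k) * h.descFactorial k) := mul_left_comm _ _ _

lemma sum_choose_mul_choose_two_mul_pow {R : Type*} [CommSemiring R] (x : R) (d : ℕ) :
    ∑ k ∈ Finset.range (d + 1), (d.choose k : R) * k.choose 2 * x ^ k =
      d.choose 2 * x ^ 2 * (1 + x) ^ (d - 2) := by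
  obtain hd | hd := lt_or_ge d 2
  · interval_cases d <;> simp [Finset.sum_range_succ]
  · obtain ⟨m, rfl⟩ := Nat.exists_eq_add_of_le' hd
    have habsorb (k : ℕ) : ((m + 2).choose (k + 2) : R) * (k + 2).choose 2 =
        (m + 2).choose 2 * m.choose k :=
      mod_cast congrArg (Nat.cast : ℕ → R) (Nat.choose_mul (Nat.le_add_left 2 k))
    rw [Finset.sum_range_succ', Finset.sum_range_succ', add_comm 1 x, Nat.add_sub_cancel, add_pow,
      Finset.mul_sum]
    simp only [habsorb, zero_add, Nat.choose_zero_succ, Nat.choose_succ_self, Nat.cast_zero,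
      mul_zero, zero_mul, add_zero, one_pow, mul_one]
    exact Finset.sum_congr rfl fun k _ => by ring

lemma pow_sub_le_sum_choose_mul_descFactorial {h : ℕ} (hh : 0 < h) {x : ℝ} (hx : 0 ≤ x)
    (hxh : x ^ 2 ≤ h) (d : ℕ) :
    (1 + x) ^ d - d.choose 2 * (1 + x) ^ (d - 2) ≤
      ∑ k ∈ Finset.range (d + 1), d.choose k * ((x / h) ^ k * h.descFactorial k) := by
  have hpos : (0 : ℝ) < h := Nat.cast_pos.2 hh
  calc (1 + x) ^ d - d.choose 2 * (1 + x) ^ (d - 2)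
      ≤ (1 + x) ^ d - d.choose 2 * x ^ 2 * (1 + x) ^ (d - 2) / h := by
        rw [mul_right_comm, mul_div_assoc]
        exact sub_le_sub_left
          (mul_le_of_le_one_right (by positivity) ((div_le_one hpos).2 hxh)) _
    _ = ∑ k ∈ Finset.range (d + 1), d.choose k * (x ^ k * (1 - k.choose 2 / h)) := by
        rw [add_comm 1 x, add_pow, add_comm x 1, ← sum_choose_mul_choose_two_mul_pow,
          Finset.sum_div, ← Finset.sum_sub_distrib]
        exact Finset.sum_congr rfl fun k _ => by rw [one_pow]; ring
    _ ≤ ∑ k ∈ Finset.range (d + 1), d.choose k * ((x / h) ^ k * h.descFactorial k) := by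
        refine Finset.sum_le_sum fun k _ => mul_le_mul_of_nonneg_left ?_ (Nat.cast_nonneg _)
        rw [div_pow, div_mul_eq_mul_div, mul_div_assoc]
        refine mul_le_mul_of_nonneg_left ?_ (pow_nonneg hx k)
        rw [le_div_iff₀ (by positivity), one_sub_div hpos.ne', div_mul_eq_mul_div,
          div_le_iff₀ hpos, mul_comm, mul_comm (h.descFactorial k : ℝ)]
        exact pow_mul_sub_choose_two_le_mul_descFactorial h k

end ElementaryBounds

lemma one_le_mu (h : ℕ) : 1 ≤ mu h := by
  rw [mu]
  exact le_add_of_nonneg_right (by positivity)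

lemma mu_le_one_add_sqrt (h : ℕ) : mu h ≤ 1 + √h := by
  have hlower := mu_sub_one_le_meanAbsSignSum (ι := Fin h)
  have hupper := meanAbsSignSum_le_sqrt (ι := Fin h)
  rw [Fintype.card_fin] at hlower hupper
  linarith

lemma IsHadamardOrder.exists_isHadamard {h : ℕ} (hh : 0 < h) (hH : IsHadamardOrder h) :
    ∃ A : Matrix (Fin h) (Fin h) ℝ, A.IsHadamard := by
  obtain ⟨A, hsign, hA⟩ := hH
  refine ⟨A, isHadamard_transpose_iff.1 (.of_mul_conjTranspose (fun i j => ?_) ?_ ?_)⟩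
  · exact Unitary.mem_iff_eq_one_or_eq_neg_one.2 (hsign j i)
  · rw [conjTranspose_eq_transpose_of_trivial, transpose_transpose, hA, Fintype.card_fin]
  · rw [Fintype.card_fin]
    exact (Nat.cast_ne_zero.2 hh.ne').isUnit.isRegular

theorem maxDet_lower_bound_small_d_general (h d : ℕ) (hh : 0 < h) (hH : IsHadamardOrder h) :
    maxDet (h + d) ≥ (h : ℝ) ^ ((h : ℝ) / 2) *
      (mu h ^ d - d.choose 2 * mu h ^ (d - 2)) := by
  obtain ⟨A, hA⟩ := hH.exists_isHadamard hh
  have : Nonempty (Fin h) := ⟨⟨0, hh⟩⟩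
  have hdet := rpow_mul_sum_choose_mul_descFactorial_le_maxDet (κ := Fin d) hA
  have hmean := mu_sub_one_le_meanAbsSignSum (ι := Fin h)
  simp only [Fintype.card_fin] at hdet hmean
  have hnonneg : 0 ≤ mu h - 1 := sub_nonneg.2 (one_le_mu h)
  have hsq : (mu h - 1) ^ 2 ≤ h :=
    (Real.le_sqrt hnonneg h.cast_nonneg).1 (sub_left_le_of_le_add (mu_le_one_add_sqrt h))
  have hbound := pow_sub_le_sum_choose_mul_descFactorial hh hnonneg hsq d
  rw [add_sub_cancel] at hbound
  calc (h : ℝ) ^ ((h : ℝ) / 2) * (mu h ^ d - d.choose 2 * mu h ^ (d - 2))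
      ≤ (h : ℝ) ^ ((h : ℝ) / 2) * ∑ k ∈ Finset.range (d + 1),
          d.choose k * (((mu h - 1) / h) ^ k * h.descFactorial k) := by gcongr
    _ ≤ (h : ℝ) ^ ((h : ℝ) / 2) * ∑ k ∈ Finset.range (d + 1),
          d.choose k * ((meanAbsSignSum (Fin h) / h) ^ k * h.descFactorial k) := by gcongr
    _ ≤ maxDet (h + d) := hdet

lemma choose_two_mul_mu_pow_le {h d : ℕ} (hd1 : 1 ≤ d) (hd3 : d ≤ 3) :
    d.choose 2 * mu h ^ (d - 2) ≤
      if d = 1 then (0 : ℝ) else if d = 2 then 1 else 5 * √h + 3 := by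
  interval_cases d
  · simp
  · simp
  · norm_num
    linarith [mu_le_one_add_sqrt h, Real.sqrt_nonneg (h : ℝ)]

/-- Let `n = h + d` where `h ≥ 4` is a Hadamard order and `1 ≤ d ≤ 3`.
Then `D(n) ≥ h^{h/2} (μ(h)^d − η)`, where `η = 0` if `d = 1`, `η = 1` if
`d = 2`, and `η = 5√h + 3` if `d = 3`. -/
theorem maxDet_lower_bound_small_d (h d n : ℕ)
    (hh : 4 ≤ h) (hH : IsHadamardOrder h)
    (hd1 : 1 ≤ d) (hd3 : d ≤ 3) (hn : n = h + d) :
    maxDet n ≥ (h : ℝ) ^ ((h : ℝ) / 2) *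
      (mu h ^ d -
        (if d = 1 then (0 : ℝ) else if d = 2 then 1
          else 5 * Real.sqrt h + 3)) := by
  subst hn
  refine (mul_le_mul_of_nonneg_left ?_ (by positivity)).trans
    (maxDet_lower_bound_small_d_general h d (by omega) hH)
  exact sub_le_sub_left (choose_two_mul_mu_pow_le hd1 hd3) _
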